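/- Let L be a real random variable and ε ≥ 0. For every t > 0 with M_L(t) = E[e^{tL}] < ∞, it holds that δ_L(ε) ≤ exp(K_L(t) − εt + t·log t − (t+1)·log(t+1)); this bound strictly tightens the moments accountant bound exp(K_L(t) − εt) for t > 0. -/

import Mathlib

open MeasureTheory Real

/-! Chernoff's method bounds the integrand of the privacy curve pointwise by `C * exp (t * x)`. The
moments accountant takes `C = 1`; the best constant is `sup_x (1 - exp (-x)) * exp (-t * x)`,
attained at `x₀ = log ((t + 1) / t)` and equal to `t ^ t / (t + 1) ^ (t + 1)`, which is less than
`1`. That it is a bound is the weighted AM-GM inequality for `exp s` and `exp (-t * s)`, where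
`s = x₀ - x`: with weights `t / (t + 1)` and `1 / (t + 1)` their geometric mean is `1`. -/

section RealInequalities

variable {t : ℝ}

theorem add_one_le_mul_exp_add_exp_neg_mul (ht : 0 ≤ t) (s : ℝ) :
    t + 1 ≤ t * exp s + exp (-(t * s)) := by
  have tangent_exp : t * (s + 1) ≤ t * exp s := mul_le_mul_of_nonneg_left (add_one_le_exp s) ht
  have tangent_exp_neg : -(t * s) + 1 ≤ exp (-(t * s)) := add_one_le_exp _
  linarith

theorem one_sub_exp_neg_le_exp (ht : 0 < t) (x : ℝ) :
    1 - exp (-x) ≤ exp (t * log t - (t + 1) * log (t + 1) + t * x) := by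
  have ht₁ : 0 < t + 1 := by linarith
  set s := log (t + 1) - log t - x with hs
  have exp_s : t * exp s = (t + 1) * exp (-x) := by
    rw [hs, sub_eq_add_neg, exp_add, exp_sub, exp_log ht₁, exp_log ht]
    field_simp
  have exp_neg_s : exp (-(t * s)) =
      (t + 1) * exp (t * log t - (t + 1) * log (t + 1) + t * x) := by
    nth_rw 1 [← exp_log ht₁]
    rw [← exp_add, hs]
    ring_nf
  have amgm := add_one_le_mul_exp_add_exp_neg_mul ht.le s
  rw [exp_s, exp_neg_s, ← mul_add] at amgm
  linarith [le_of_mul_le_mul_left ((mul_one (t + 1)).trans_le amgm) ht₁]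

theorem mul_log_lt_add_one_mul_log_add_one (ht : 0 < t) :
    t * log t < (t + 1) * log (t + 1) :=
  calc t * log t < t * log (t + 1) := by gcongr; exact lt_add_one t
    _ ≤ (t + 1) * log (t + 1) := by
      gcongr
      · exact log_nonneg (by linarith)
      · exact (lt_add_one t).le

end RealInequalities

section PrivacyCurve

open ProbabilityTheory

variable {Ω : Type*} [MeasurableSpace Ω]

/-- The privacy curve `δ_L(ε) = E[(1 - e^{-(L - ε)})⁺]` of a privacy loss `L`, with the expectation
taken as a Bochner integral against an arbitrary measure `μ`. -/
noncomputable def privacyCurve (μ : Measure Ω) (L : Ω → ℝ) (ε : ℝ) : ℝ :=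
  ∫ ω, max (1 - exp (-(L ω - ε))) 0 ∂μ

variable {μ : Measure Ω} {L : Ω → ℝ} {t : ℝ}

theorem privacyCurve_le_exp_mul_mgf (ε : ℝ) (ht : 0 < t)
    (hM : Integrable (fun ω => exp (t * L ω)) μ) :
    privacyCurve μ L ε ≤
      exp (t * log t - (t + 1) * log (t + 1) - ε * t) * mgf L μ t := by
  rw [privacyCurve, mgf, ← integral_const_mul]
  refine integral_mono_of_nonneg (.of_forall fun ω => le_max_right _ _) (hM.const_mul _)
    (.of_forall fun ω => max_le ?_ (by positivity))
  calc 1 - exp (-(L ω - ε))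
      ≤ exp (t * log t - (t + 1) * log (t + 1) + t * (L ω - ε)) := one_sub_exp_neg_le_exp ht _
    _ = exp (t * log t - (t + 1) * log (t + 1) - ε * t) * exp (t * L ω) := by
      rw [← exp_add]
      ring_nf

theorem privacyCurve_le_exp_cgf [NeZero μ] (ε : ℝ) (ht : 0 < t)
    (hM : Integrable (fun ω => exp (t * L ω)) μ) :
    privacyCurve μ L ε ≤
      exp (cgf L μ t - ε * t + t * log t - (t + 1) * log (t + 1)) := by
  refine (privacyCurve_le_exp_mul_mgf ε ht hM).trans_eq ?_
  rw [← exp_cgf hM, ← exp_add]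
  ring_nf

theorem stmt8_general [NeZero μ] (ε : ℝ) (ht : 0 < t)
    (hM : Integrable (fun ω => exp (t * L ω)) μ) :
    privacyCurve μ L ε ≤
      exp (cgf L μ t - ε * t + t * log t - (t + 1) * log (t + 1)) ∧
    exp (cgf L μ t - ε * t + t * log t - (t + 1) * log (t + 1)) <
      exp (cgf L μ t - ε * t) := by
  refine ⟨privacyCurve_le_exp_cgf ε ht hM, exp_lt_exp.mpr ?_⟩
  linarith [mul_log_lt_add_one_mul_log_add_one ht]

end PrivacyCurve

/-- Refined moments accountant: for `t > 0` with `M_L(t) < ∞`,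
`δ_L(ε) ≤ exp(K_L(t) - εt + t log t - (t+1) log(t+1))`, and this bound is a strict
improvement over the moments accountant bound `exp(K_L(t) - εt)`. -/
theorem stmt8 {Ω : Type*} [MeasurableSpace Ω] (μ : Measure Ω) [IsProbabilityMeasure μ]
    (L : Ω → ℝ) (hL : Measurable L) (ε : ℝ) (hε : 0 ≤ ε)
    (t : ℝ) (ht : 0 < t) (hM : Integrable (fun ω => Real.exp (t * L ω)) μ) :
    (∫ ω, max (1 - Real.exp (-(L ω - ε))) 0 ∂μ) ≤
      Real.exp ((Real.log (∫ ω, Real.exp (t * L ω) ∂μ)) - ε * t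
        + t * Real.log t - (t + 1) * Real.log (t + 1)) ∧
    Real.exp ((Real.log (∫ ω, Real.exp (t * L ω) ∂μ)) - ε * t
        + t * Real.log t - (t + 1) * Real.log (t + 1)) <
      Real.exp ((Real.log (∫ ω, Real.exp (t * L ω) ∂μ)) - ε * t) :=
  stmt8_general ε ht hM
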